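/- Let s > 3/2. There exists a constant C (depending on φ and s but not on n) such that for every sufficiently large integer n, the functions f_n(x) = 2^{-ns} φ(x) sin((17/12)·2^n x), g_n(x) = 2^{-n} φ(x), and u_0^n = f_n + g_n satisfy ‖u_0^n ∂_x g_n‖_{H^s(ℝ)} ≤ C·2^{-n}. -/

import Mathlib

open MeasureTheory Filter

/-- Fourier transform with convention `f̂(ξ) = ∫ f(x) e^{-i x ξ} dx`. -/
noncomputable def fourierT (f : ℝ → ℂ) (ξ : ℝ) : ℂ :=
  ∫ x : ℝ, f x * Complex.exp (-(Complex.I * x * ξ))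

/-- The `H^s(ℝ)` norm, `‖f‖_{H^s}² = ∫ (1+|ξ|²)^s |f̂(ξ)|² dξ`. -/
noncomputable def sobolevNorm (s : ℝ) (f : ℝ → ℂ) : ℝ :=
  Real.sqrt (∫ ξ : ℝ, (1 + ξ ^ 2) ^ s * ‖fourierT f ξ‖ ^ 2)

/-- Membership in `H^s(ℝ)` (for integrable representatives). -/
def MemSobolev (s : ℝ) (f : ℝ → ℂ) : Prop :=
  MeasureTheory.Integrable f ∧
    MeasureTheory.Integrable (fun ξ : ℝ => (1 + ξ ^ 2) ^ s * ‖fourierT f ξ‖ ^ 2)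

/-- The high-frequency functions `f_n(x) = 2^{-ns} φ(x) sin((17/12)·2^n x)`. -/
noncomputable def fn (s : ℝ) (φ : ℝ → ℂ) (n : ℕ) : ℝ → ℂ :=
  fun x => (((2 : ℝ) ^ (-(n : ℝ) * s) * Real.sin (17 / 12 * 2 ^ n * x) : ℝ) : ℂ) * φ x

/-- The low-frequency functions `g_n(x) = 2^{-n} φ(x)`. -/
noncomputable def gn (φ : ℝ → ℂ) (n : ℕ) : ℝ → ℂ :=
  fun x => (((2 : ℝ) ^ (-(n : ℝ)) : ℝ) : ℂ) * φ x

/-- `φ̂` is an even, real-valued, nonnegative function in `C_c^∞(ℝ)` with `φ̂ = 1` on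
`{|ξ| ≤ 1/4}` and `φ̂ = 0` on `{|ξ| ≥ 1/2}`, and `φ` is the (continuous, integrable)
function on `ℝ` whose Fourier transform is `φ̂`. -/
structure CutoffPair (φhat : ℝ → ℝ) (φ : ℝ → ℂ) : Prop where
  smooth : ContDiff ℝ (⊤ : ℕ∞) φhat
  compactSupport : HasCompactSupport φhat
  even : ∀ ξ : ℝ, φhat (-ξ) = φhat ξ
  nonneg : ∀ ξ : ℝ, 0 ≤ φhat ξ
  eq_one : ∀ ξ : ℝ, |ξ| ≤ 1 / 4 → φhat ξ = 1
  eq_zero : ∀ ξ : ℝ, 1 / 2 ≤ |ξ| → φhat ξ = 0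
  continuous : Continuous φ
  integrable : MeasureTheory.Integrable φ
  fourier_eq : ∀ ξ : ℝ, fourierT φ ξ = (φhat ξ : ℂ)

/-!
Since `∂ₓ gₙ = 2⁻ⁿ ∂ₓ φ`, we have `u₀ⁿ ∂ₓ gₙ = 2⁻ⁿ (2^{-ns} sin(λₙ x) h + 2⁻ⁿ h)` with `h = φ ∂ₓ φ`
and `λₙ = (17/12) 2ⁿ`, so it suffices to bound the bracket in `H^s` uniformly in `n`. Multiplication
by `sin(λ x)` translates the Fourier transform by `±λ`, which by Peetre's inequality
`(1 + ξ²)^s ≤ 2^|s| (1 + λ²)^s (1 + (ξ - λ)²)^|s|` costs a factor of order `λ^s`, measured against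
the `H^|s|` norm of `h`; this is exactly compensated by `2^{-ns}`. That norm is finite because `φ`,
as the inverse Fourier transform of a Schwartz function, is itself a Schwartz function.
-/

open scoped FourierTransform SchwartzMap

/-! ### Japanese brackets -/

lemma rpow_le_rpow_abs_mul_rpow {x y B : ℝ} (hx : 0 < x) (hy : 0 < y) (hxy : x ≤ B * y)
    (hyx : y ≤ B * x) (s : ℝ) : x ^ s ≤ B ^ |s| * y ^ s := by
  have hB : 0 < B := pos_of_mul_pos_left (hx.trans_le hxy) hy.le
  rcases le_total 0 s with hs | hs
  · calc x ^ s ≤ (B * y) ^ s := Real.rpow_le_rpow hx.le hxy hs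
      _ = B ^ |s| * y ^ s := by rw [Real.mul_rpow hB.le hy.le, abs_of_nonneg hs]
  · calc x ^ s = B ^ |s| * (B * x) ^ s := by
          rw [Real.mul_rpow hB.le hx.le, ← mul_assoc, ← Real.rpow_add hB, abs_of_nonpos hs,
            neg_add_cancel, Real.rpow_zero, one_mul]
      _ ≤ B ^ |s| * y ^ s := by
          gcongr ?_ * ?_
          exact Real.rpow_le_rpow_of_nonpos hy hyx hs

lemma one_add_sq_le_two_mul (ξ η : ℝ) : 1 + ξ ^ 2 ≤ 2 * (1 + (ξ - η) ^ 2) * (1 + η ^ 2) := by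
  nlinarith [sq_nonneg (ξ - 2 * η), sq_nonneg (η * (ξ - η))]

lemma peetre_inequality (s ξ η : ℝ) :
    (1 + ξ ^ 2) ^ s ≤ 2 ^ |s| * (1 + η ^ 2) ^ s * (1 + (ξ - η) ^ 2) ^ |s| := by
  have hηξ : 1 + η ^ 2 ≤ 2 * (1 + (ξ - η) ^ 2) * (1 + ξ ^ 2) := by
    simpa only [sub_sq_comm η ξ] using one_add_sq_le_two_mul η ξ
  calc (1 + ξ ^ 2) ^ s ≤ (2 * (1 + (ξ - η) ^ 2)) ^ |s| * (1 + η ^ 2) ^ s :=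
        rpow_le_rpow_abs_mul_rpow (by positivity) (by positivity) (one_add_sq_le_two_mul ξ η) hηξ s
    _ = 2 ^ |s| * (1 + η ^ 2) ^ s * (1 + (ξ - η) ^ 2) ^ |s| := by
        rw [Real.mul_rpow two_pos.le (by positivity)]; ring

lemma one_add_mul_sq_rpow_le {a m : ℝ} (ha : 1 ≤ a) (hm : 1 ≤ m) (s : ℝ) :
    (1 + (a * m) ^ 2) ^ s ≤ (1 + a ^ 2) ^ |s| * (m ^ s) ^ 2 := by
  have hm_sq : 1 ≤ m ^ 2 := one_le_pow₀ hm
  have ha_sq : 1 ≤ a ^ 2 := one_le_pow₀ ha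
  have hle : 1 + (a * m) ^ 2 ≤ (1 + a ^ 2) * m ^ 2 := by linarith
  have hge : m ^ 2 ≤ (1 + a ^ 2) * (1 + (a * m) ^ 2) := by
    nlinarith [mul_le_mul_of_nonneg_right ha_sq (sq_nonneg m), sq_nonneg (a * (a * m))]
  have hpow : (m ^ 2) ^ s = (m ^ s) ^ 2 := (Real.rpow_pow_comm (by linarith) s 2).symm
  simpa only [hpow] using
    rpow_le_rpow_abs_mul_rpow (by positivity) (by positivity) hle hge s

/-! ### The Fourier transform -/

section Fourier

variable {f g : ℝ → ℂ}

lemma fourierT_two_pi_mul (f : ℝ → ℂ) (ξ : ℝ) : fourierT f (2 * Real.pi * ξ) = 𝓕 f ξ := by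
  rw [Real.fourier_real_eq_integral_exp_smul, fourierT]
  congr! 2 with x
  rw [smul_eq_mul, mul_comm]
  congr 2
  push_cast
  ring

lemma norm_exp_neg_I_mul (x ξ : ℝ) : ‖Complex.exp (-(Complex.I * x * ξ))‖ = 1 := by
  simp [Complex.norm_exp]

lemma integrable_mul_exp (hf : Integrable f) (ξ : ℝ) :
    Integrable fun x : ℝ => f x * Complex.exp (-(Complex.I * x * ξ)) :=
  hf.mul_bdd (c := 1) (by fun_prop) (ae_of_all _ fun x => (norm_exp_neg_I_mul x ξ).le)

lemma continuous_fourierT (hf : Integrable f) : Continuous (fourierT f) := by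
  refine continuous_of_dominated (bound := fun x => ‖f x‖)
    (fun ξ => (integrable_mul_exp hf ξ).aestronglyMeasurable)
    (fun ξ => ae_of_all _ fun x => ?_) hf.norm (ae_of_all _ fun x => by fun_prop)
  rw [norm_mul, norm_exp_neg_I_mul, mul_one]

lemma fourierT_add (hf : Integrable f) (hg : Integrable g) (ξ : ℝ) :
    fourierT (fun x => f x + g x) ξ = fourierT f ξ + fourierT g ξ := by
  simp only [fourierT, add_mul]
  exact integral_add (integrable_mul_exp hf ξ) (integrable_mul_exp hg ξ)

lemma fourierT_const_mul (c : ℂ) (f : ℝ → ℂ) (ξ : ℝ) :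
    fourierT (fun x => c * f x) ξ = c * fourierT f ξ := by
  simp only [fourierT, mul_assoc, integral_const_mul]

/-- The modulation `x ↦ e^{iηx} f(x)`, which translates the Fourier transform of `f` by `η`. -/
noncomputable def modulate (η : ℝ) (f : ℝ → ℂ) (x : ℝ) : ℂ :=
  Complex.exp (Complex.I * x * η) * f x

lemma integrable_modulate (hf : Integrable f) (η : ℝ) : Integrable (modulate η f) := by
  refine (integrable_mul_exp hf (-η)).congr (ae_of_all _ fun x => ?_)
  simp [modulate, mul_comm (f x)]

lemma fourierT_modulate (η : ℝ) (f : ℝ → ℂ) (ξ : ℝ) :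
    fourierT (modulate η f) ξ = fourierT f (ξ - η) := by
  simp only [fourierT, modulate]
  congr! 2 with x
  have hexp : Complex.exp (-(Complex.I * x * ↑(ξ - η))) =
      Complex.exp (Complex.I * x * η) * Complex.exp (-(Complex.I * x * ξ)) := by
    rw [← Complex.exp_add]; congr 1; push_cast; ring
  rw [hexp]
  ring

lemma sin_mul_eq_modulate (η : ℝ) (f : ℝ → ℂ) (x : ℝ) :
    (Real.sin (η * x) : ℂ) * f x =
      Complex.I / 2 * modulate (-η) f x + -(Complex.I / 2) * modulate η f x := by
  simp only [modulate, Complex.ofReal_sin, Complex.ofReal_neg, Complex.ofReal_mul, Complex.sin]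
  ring_nf

end Fourier

/-! ### Sobolev norms -/

section Sobolev

variable {s : ℝ} {f g : ℝ → ℂ}

/-- The weighted Fourier transform `(1 + ξ²)^{s/2} f̂(ξ)`, whose `L²` norm is the `H^s` norm of
`f`. -/
noncomputable def weightedFourierT (s : ℝ) (f : ℝ → ℂ) (ξ : ℝ) : ℂ :=
  ((1 + ξ ^ 2) ^ (s / 2) : ℝ) • fourierT f ξ

lemma norm_weightedFourierT_sq (s : ℝ) (f : ℝ → ℂ) (ξ : ℝ) :
    ‖weightedFourierT s f ξ‖ ^ 2 = (1 + ξ ^ 2) ^ s * ‖fourierT f ξ‖ ^ 2 := by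
  rw [weightedFourierT, norm_smul, mul_pow, Real.norm_of_nonneg (by positivity),
    ← Real.rpow_mul_natCast (by positivity), Nat.cast_ofNat, div_mul_cancel₀ s two_ne_zero]

lemma continuous_weightedFourierT (hf : Integrable f) : Continuous (weightedFourierT s f) := by
  have hweight : Continuous fun ξ : ℝ => (1 + ξ ^ 2) ^ (s / 2) :=
    Continuous.rpow_const (by fun_prop) fun ξ => Or.inl (by positivity)
  exact hweight.smul (continuous_fourierT hf)

lemma weightedFourierT_add (hf : Integrable f) (hg : Integrable g) :
    weightedFourierT s (fun x => f x + g x) = weightedFourierT s f + weightedFourierT s g := by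
  ext ξ
  simp only [weightedFourierT, Pi.add_apply, fourierT_add hf hg, smul_add]

lemma memSobolev_iff_memLp :
    MemSobolev s f ↔ Integrable f ∧ MemLp (weightedFourierT s f) 2 := by
  refine and_congr_right fun hf => ?_
  simp only [memLp_two_iff_integrable_sq_norm (continuous_weightedFourierT hf).aestronglyMeasurable,
    norm_weightedFourierT_sq]

lemma sobolevNorm_eq_lpNorm (hf : Integrable f) :
    sobolevNorm s f = lpNorm (weightedFourierT s f) 2 volume := by
  rw [lpNorm_eq_integral_norm_rpow_toReal two_ne_zero ENNReal.ofNat_ne_top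
    (continuous_weightedFourierT hf).aestronglyMeasurable]
  simp only [ENNReal.toReal_ofNat, Real.rpow_ofNat, norm_weightedFourierT_sq, sobolevNorm,
    Real.sqrt_eq_rpow, one_div]

lemma sobolevNorm_nonneg (s : ℝ) (f : ℝ → ℂ) : 0 ≤ sobolevNorm s f := Real.sqrt_nonneg _

lemma MemSobolev.add (hf : MemSobolev s f) (hg : MemSobolev s g) :
    MemSobolev s fun x => f x + g x := by
  refine memSobolev_iff_memLp.2 ⟨hf.1.add hg.1, ?_⟩
  rw [weightedFourierT_add hf.1 hg.1]
  exact (memSobolev_iff_memLp.1 hf).2.add (memSobolev_iff_memLp.1 hg).2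

lemma sobolevNorm_add_le (hf : MemSobolev s f) (hg : MemSobolev s g) :
    sobolevNorm s (fun x => f x + g x) ≤ sobolevNorm s f + sobolevNorm s g := by
  rw [sobolevNorm_eq_lpNorm (hf.add hg).1, sobolevNorm_eq_lpNorm hf.1, sobolevNorm_eq_lpNorm hg.1,
    weightedFourierT_add hf.1 hg.1]
  exact lpNorm_add_le (memSobolev_iff_memLp.1 hf).2 one_le_two

lemma MemSobolev.const_mul (hf : MemSobolev s f) (c : ℂ) : MemSobolev s fun x => c * f x := by
  refine ⟨hf.1.const_mul c, ?_⟩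
  simpa only [fourierT_const_mul, norm_mul, mul_pow, mul_left_comm] using hf.2.const_mul (‖c‖ ^ 2)

lemma sobolevNorm_const_mul (s : ℝ) (c : ℂ) (f : ℝ → ℂ) :
    sobolevNorm s (fun x => c * f x) = ‖c‖ * sobolevNorm s f := by
  simp only [sobolevNorm, fourierT_const_mul, norm_mul, mul_pow, mul_left_comm _ (‖c‖ ^ 2),
    integral_const_mul]
  rw [Real.sqrt_mul (sq_nonneg _), Real.sqrt_sq (norm_nonneg c)]

end Sobolev

/-! ### Modulation in Sobolev spaces -/

section Modulation

variable {s : ℝ} {f : ℝ → ℂ}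

lemma weight_mul_fourierT_modulate_sq_le (s η : ℝ) (f : ℝ → ℂ) (ξ : ℝ) :
    (1 + ξ ^ 2) ^ s * ‖fourierT (modulate η f) ξ‖ ^ 2 ≤
      2 ^ |s| * (1 + η ^ 2) ^ s * ((1 + (ξ - η) ^ 2) ^ |s| * ‖fourierT f (ξ - η)‖ ^ 2) := by
  rw [fourierT_modulate, ← mul_assoc]
  gcongr
  exact peetre_inequality s ξ η

lemma MemSobolev.integrable_translate (hf : MemSobolev s f) (η : ℝ) :
    Integrable fun ξ => (1 + (ξ - η) ^ 2) ^ s * ‖fourierT f (ξ - η)‖ ^ 2 :=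
  hf.2.comp_sub_right η

lemma memSobolev_modulate (hf : MemSobolev |s| f) (η : ℝ) : MemSobolev s (modulate η f) := by
  have hfη : Integrable (modulate η f) := integrable_modulate hf.1 η
  refine ⟨hfη, ((hf.integrable_translate η).const_mul (2 ^ |s| * (1 + η ^ 2) ^ s)).mono' ?_ ?_⟩
  · simp only [← norm_weightedFourierT_sq]
    exact ((continuous_weightedFourierT hfη).norm.pow 2).aestronglyMeasurable
  · refine ae_of_all _ fun ξ => ?_
    rw [Real.norm_of_nonneg (by positivity)]
    exact weight_mul_fourierT_modulate_sq_le s η f ξ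

lemma sobolevNorm_modulate_le (hf : MemSobolev |s| f) (η : ℝ) :
    sobolevNorm s (modulate η f) ≤ √(2 ^ |s| * (1 + η ^ 2) ^ s) * sobolevNorm |s| f := by
  rw [sobolevNorm, sobolevNorm, ← Real.sqrt_mul (by positivity)]
  refine Real.sqrt_le_sqrt ?_
  calc ∫ ξ, (1 + ξ ^ 2) ^ s * ‖fourierT (modulate η f) ξ‖ ^ 2
    _ ≤ ∫ ξ, 2 ^ |s| * (1 + η ^ 2) ^ s * ((1 + (ξ - η) ^ 2) ^ |s| * ‖fourierT f (ξ - η)‖ ^ 2) :=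
        integral_mono_of_nonneg (ae_of_all _ fun ξ => by positivity)
          ((hf.integrable_translate η).const_mul _)
          (ae_of_all _ (weight_mul_fourierT_modulate_sq_le s η f))
    _ = 2 ^ |s| * (1 + η ^ 2) ^ s * ∫ ξ, (1 + ξ ^ 2) ^ |s| * ‖fourierT f ξ‖ ^ 2 := by
        rw [integral_const_mul,
          integral_sub_right_eq_self (fun ξ => (1 + ξ ^ 2) ^ |s| * ‖fourierT f ξ‖ ^ 2) η]

lemma MemSobolev.sin_mul (hf : MemSobolev |s| f) (η : ℝ) :
    MemSobolev s fun x => (Real.sin (η * x) : ℂ) * f x := by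
  simp only [sin_mul_eq_modulate]
  exact ((memSobolev_modulate hf (-η)).const_mul _).add ((memSobolev_modulate hf η).const_mul _)

lemma sobolevNorm_sin_mul_le (hf : MemSobolev |s| f) (η : ℝ) :
    sobolevNorm s (fun x => (Real.sin (η * x) : ℂ) * f x) ≤
      √(2 ^ |s| * (1 + η ^ 2) ^ s) * sobolevNorm |s| f := by
  have hneg := sobolevNorm_modulate_le hf (-η)
  rw [neg_sq] at hneg
  simp only [sin_mul_eq_modulate]
  refine (sobolevNorm_add_le ((memSobolev_modulate hf (-η)).const_mul _)
    ((memSobolev_modulate hf η).const_mul _)).trans ?_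
  have hI : ‖Complex.I / 2‖ = 1 / 2 := by simp
  rw [sobolevNorm_const_mul, sobolevNorm_const_mul, norm_neg, hI]
  linarith [sobolevNorm_modulate_le hf η]

end Modulation

/-! ### Schwartz functions -/

section Schwartz

/-- The dilation `x ↦ f(cx)` of a Schwartz function by a nonzero factor `c`. -/
noncomputable def schwartzDilation (c : ℝ) (hc : c ≠ 0) : 𝓢(ℝ, ℂ) →L[ℂ] 𝓢(ℝ, ℂ) :=
  SchwartzMap.compCLMOfContinuousLinearEquiv ℂ
    (ContinuousLinearEquiv.unitsEquivAut ℝ (Units.mk0 c hc))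

lemma schwartzDilation_apply {c : ℝ} (hc : c ≠ 0) (f : 𝓢(ℝ, ℂ)) (x : ℝ) :
    schwartzDilation c hc f x = f (c * x) := by
  simp [schwartzDilation, mul_comm]

lemma exists_schwartzMap_eq_fourierT (f : 𝓢(ℝ, ℂ)) : ∃ F : 𝓢(ℝ, ℂ), ⇑F = fourierT f := by
  have hpi : (2 * Real.pi)⁻¹ ≠ 0 := by positivity
  refine ⟨schwartzDilation _ hpi (𝓕 f), funext fun ξ => ?_⟩
  rw [schwartzDilation_apply, SchwartzMap.fourier_coe, ← fourierT_two_pi_mul,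
    mul_inv_cancel_left₀ (by positivity)]

lemma exists_schwartzMap_eq_of_fourierT_eq {f : ℝ → ℂ} (hf : Continuous f) (hfi : Integrable f)
    {F : 𝓢(ℝ, ℂ)} (hF : fourierT f = F) : ∃ Φ : 𝓢(ℝ, ℂ), ⇑Φ = f := by
  have hpi : 2 * Real.pi ≠ 0 := by positivity
  have hG : ⇑(schwartzDilation _ hpi F) = 𝓕 f := by
    ext ξ
    rw [schwartzDilation_apply, ← fourierT_two_pi_mul, hF]
  refine ⟨𝓕⁻ (schwartzDilation _ hpi F), ?_⟩
  rw [SchwartzMap.fourierInv_coe, hG]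
  exact hf.fourierInv_fourier_eq hfi (hG ▸ (schwartzDilation _ hpi F).integrable)

lemma CutoffPair.exists_schwartzMap_eq {φhat : ℝ → ℝ} {φ : ℝ → ℂ} (hφ : CutoffPair φhat φ) :
    ∃ Φ : 𝓢(ℝ, ℂ), ⇑Φ = φ := by
  have hsmooth : ContDiff ℝ (⊤ : ℕ∞) fun ξ => (φhat ξ : ℂ) :=
    Complex.ofRealCLM.contDiff.comp hφ.smooth
  have hsupp : HasCompactSupport fun ξ => (φhat ξ : ℂ) :=
    hφ.compactSupport.comp_left Complex.ofReal_zero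
  exact exists_schwartzMap_eq_of_fourierT_eq hφ.continuous hφ.integrable
    (F := hsupp.toSchwartzMap hsmooth) (funext hφ.fourier_eq)

lemma memSobolev_schwartzMap (s : ℝ) (f : 𝓢(ℝ, ℂ)) : MemSobolev s f := by
  obtain ⟨F, hF⟩ := exists_schwartzMap_eq_fourierT f
  have hweight := Function.hasTemperateGrowth_one_add_norm_sq_rpow ℝ (s / 2)
  refine memSobolev_iff_memLp.2 ⟨f.integrable, ?_⟩
  have hweighted : weightedFourierT s f =
      SchwartzMap.smulLeftCLM ℂ (fun ξ : ℝ => (1 + ‖ξ‖ ^ 2) ^ (s / 2)) F := by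
    ext ξ
    rw [SchwartzMap.smulLeftCLM_apply_apply hweight, weightedFourierT, hF, Real.norm_eq_abs, sq_abs]
  rw [hweighted]
  exact SchwartzMap.memLp _ 2 volume

lemma memSobolev_schwartzMap_mul_deriv (s : ℝ) (Φ : 𝓢(ℝ, ℂ)) :
    MemSobolev s fun x => Φ x * deriv Φ x := by
  have hmul : (fun x => Φ x * deriv Φ x) =
      SchwartzMap.pairing (ContinuousLinearMap.mul ℝ ℂ) Φ (SchwartzMap.derivCLM ℝ ℂ Φ) := by
    ext x; simp
  exact hmul ▸ memSobolev_schwartzMap s _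

end Schwartz

/-! ### The functions `fₙ` and `gₙ` -/

section HighLowFrequency

variable {s : ℝ} {f : ℝ → ℂ}

lemma fn_eq_const_mul_sin_mul (s : ℝ) (f : ℝ → ℂ) (n : ℕ) :
    fn s f n = fun x => (((2 : ℝ) ^ (-(n : ℝ) * s) : ℝ) : ℂ) *
      ((Real.sin (17 / 12 * 2 ^ n * x) : ℂ) * f x) := by
  ext x
  rw [fn, Complex.ofReal_mul, mul_assoc]

lemma memSobolev_fn (hf : MemSobolev |s| f) (n : ℕ) : MemSobolev s (fn s f n) := by
  rw [fn_eq_const_mul_sin_mul]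
  exact (hf.sin_mul _).const_mul _

lemma two_rpow_neg_mul_sqrt_weight_le (s : ℝ) (n : ℕ) :
    (2 : ℝ) ^ (-(n : ℝ) * s) * √(2 ^ |s| * (1 + (17 / 12 * 2 ^ n) ^ 2) ^ s) ≤
      √(2 ^ |s| * (1 + (17 / 12) ^ 2) ^ |s|) := by
  have hpow : (2 : ℝ) ^ (-(n : ℝ) * s) = (((2 : ℝ) ^ n) ^ s)⁻¹ := by
    rw [neg_mul, Real.rpow_neg two_pos.le, Real.rpow_mul two_pos.le, Real.rpow_natCast]
  have hweight : (1 + (17 / 12 * 2 ^ n) ^ 2) ^ s ≤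
      (1 + (17 / 12) ^ 2) ^ |s| * (((2 : ℝ) ^ n) ^ s) ^ 2 :=
    one_add_mul_sq_rpow_le (by norm_num) (one_le_pow₀ one_le_two) s
  rw [hpow, inv_mul_le_iff₀' (by positivity)]
  calc √(2 ^ |s| * (1 + (17 / 12 * 2 ^ n) ^ 2) ^ s)
    _ ≤ √(2 ^ |s| * (1 + (17 / 12) ^ 2) ^ |s| * (((2 : ℝ) ^ n) ^ s) ^ 2) := by
        rw [mul_assoc]; gcongr
    _ = √(2 ^ |s| * (1 + (17 / 12) ^ 2) ^ |s|) * ((2 : ℝ) ^ n) ^ s := by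
        rw [Real.sqrt_mul (by positivity), Real.sqrt_sq (by positivity)]

lemma sobolevNorm_fn_le (hf : MemSobolev |s| f) (n : ℕ) :
    sobolevNorm s (fn s f n) ≤ √(2 ^ |s| * (1 + (17 / 12) ^ 2) ^ |s|) * sobolevNorm |s| f := by
  rw [fn_eq_const_mul_sin_mul, sobolevNorm_const_mul, Complex.norm_real,
    Real.norm_of_nonneg (by positivity)]
  calc _ ≤ (2 : ℝ) ^ (-(n : ℝ) * s) *
        (√(2 ^ |s| * (1 + (17 / 12 * 2 ^ n) ^ 2) ^ s) * sobolevNorm |s| f) := by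
        gcongr; exact sobolevNorm_sin_mul_le hf _
    _ ≤ √(2 ^ |s| * (1 + (17 / 12) ^ 2) ^ |s|) * sobolevNorm |s| f := by
        rw [← mul_assoc]
        exact mul_le_mul_of_nonneg_right (two_rpow_neg_mul_sqrt_weight_le s n)
          (sobolevNorm_nonneg _ _)

lemma memSobolev_gn (hf : MemSobolev s f) (n : ℕ) : MemSobolev s (gn f n) :=
  hf.const_mul _

lemma sobolevNorm_gn_le (s : ℝ) (f : ℝ → ℂ) (n : ℕ) :
    sobolevNorm s (gn f n) ≤ sobolevNorm s f := by
  have hpow : (2 : ℝ) ^ (-(n : ℝ)) ≤ 1 :=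
    Real.rpow_le_one_of_one_le_of_nonpos one_le_two (neg_nonpos.2 n.cast_nonneg)
  unfold gn
  rw [sobolevNorm_const_mul, Complex.norm_real, Real.norm_of_nonneg (by positivity)]
  exact mul_le_of_le_one_left (sobolevNorm_nonneg s f) hpow

lemma fn_add_gn_mul_deriv_gn (s : ℝ) {φ : ℝ → ℂ} (hφ : Differentiable ℝ φ) (n : ℕ) :
    (fun x => (fn s φ n x + gn φ n x) * deriv (gn φ n) x) =
      fun x => (((2 : ℝ) ^ (-(n : ℝ)) : ℝ) : ℂ) *
        (fn s (fun y => φ y * deriv φ y) n x + gn (fun y => φ y * deriv φ y) n x) := by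
  ext x
  have hderiv : deriv (gn φ n) x = (((2 : ℝ) ^ (-(n : ℝ)) : ℝ) : ℂ) * deriv φ x :=
    deriv_const_mul _ (hφ x)
  rw [hderiv]
  simp only [fn, gn]
  ring

end HighLowFrequency

theorem u0n_deriv_gn_bound_general (s : ℝ) (Φ : 𝓢(ℝ, ℂ)) :
    ∃ C : ℝ, 0 < C ∧ ∀ n : ℕ,
      MemSobolev s (fun x => (fn s Φ n x + gn Φ n x) * deriv (gn Φ n) x) ∧
      sobolevNorm s (fun x => (fn s Φ n x + gn Φ n x) * deriv (gn Φ n) x)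
        ≤ C * (2 : ℝ) ^ (-(n : ℝ)) := by
  set h : ℝ → ℂ := fun x => Φ x * deriv Φ x
  have hh (t : ℝ) : MemSobolev t h := memSobolev_schwartzMap_mul_deriv t Φ
  set K := √(2 ^ |s| * (1 + (17 / 12) ^ 2) ^ |s|) * sobolevNorm |s| h + sobolevNorm s h
  have hK : 0 ≤ K := add_nonneg (mul_nonneg (Real.sqrt_nonneg _) (sobolevNorm_nonneg _ _))
    (sobolevNorm_nonneg _ _)
  refine ⟨K + 1, by linarith, fun n => ?_⟩
  have hfn : MemSobolev s (fn s h n) := memSobolev_fn (hh |s|) n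
  have hgn : MemSobolev s (gn h n) := memSobolev_gn (hh s) n
  rw [fn_add_gn_mul_deriv_gn s Φ.differentiable n]
  refine ⟨(hfn.add hgn).const_mul _, ?_⟩
  rw [sobolevNorm_const_mul, Complex.norm_real, Real.norm_of_nonneg (by positivity), mul_comm]
  gcongr
  calc sobolevNorm s (fun x => fn s h n x + gn h n x)
    _ ≤ sobolevNorm s (fn s h n) + sobolevNorm s (gn h n) := sobolevNorm_add_le hfn hgn
    _ ≤ K := add_le_add (sobolevNorm_fn_le (hh |s|) n) (sobolevNorm_gn_le s h n)
    _ ≤ K + 1 := by linarith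

/-- For `s > 3/2` there is `C` (independent of `n`) such that, with `u_0^n = f_n + g_n`,
`‖u_0^n ∂_x g_n‖_{H^s} ≤ C·2^{-n}` for all sufficiently large `n`. -/
theorem u0n_deriv_gn_bound (s : ℝ) (hs : 3 / 2 < s) (φhat : ℝ → ℝ) (φ : ℝ → ℂ)
    (hφ : CutoffPair φhat φ) :
    ∃ C : ℝ, 0 < C ∧ ∃ N : ℕ, ∀ n : ℕ, N ≤ n →
      sobolevNorm s (fun x => (fn s φ n x + gn φ n x) * deriv (gn φ n) x)
        ≤ C * (2 : ℝ) ^ (-(n : ℝ)) := by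
  obtain ⟨Φ, rfl⟩ := hφ.exists_schwartzMap_eq
  obtain ⟨C, hC, hbound⟩ := u0n_deriv_gn_bound_general s Φ
  exact ⟨C, hC, 0, fun n _ => (hbound n).2⟩
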